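/- Let L ≥ 1 and K ≥ 1 be natural numbers and, for each k ∈ {1,…,K}, let p_k⁰, p_k¹ : Fin L → ℝ be strictly positive functions each summing to 1 (the conditional pmfs of sensor k's quantized output under H₀ and H₁, with the sensors conditionally independent given the hypothesis). Then the average Chernoff information of the joint quantized data is at most the average of the per-sensor Chernoff informations: −(1/K) · inf_{α ∈ [0,1]} log(∑_{u ∈ (Fin L)^K} ∏_{k=1}^{K} p_k⁰(u_k)^α p_k¹(u_k)^{1−α}) ≤ (1/K) · ∑_{k=1}^{K} (− inf_{α ∈ [0,1]} log(∑_{v ∈ Fin L} p_k⁰(v)^α p_k¹(v)^{1−α})). -/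

import Mathlib

/-!
Since `∑ u, ∏ k` factors as `∏ k, ∑ v`, the joint log-sum at `α` is the sum over `k` of the
per-sensor log-sums at the same `α`. The infimum of a sum is at least the sum of the infima;
the per-sensor infima are genuine because each log-sum is continuous, hence bounded below, on
the compact interval `[0, 1]`.
-/

open Finset

theorem chernoff_sum_pos {L : ℕ} (hL : 1 ≤ L) {p q : Fin L → ℝ}
    (hp : ∀ v, 0 < p v) (hq : ∀ v, 0 < q v) (α : ℝ) :
    0 < ∑ v, p v ^ α * q v ^ (1 - α) :=
  Finset.sum_pos
    (fun v _ => mul_pos (Real.rpow_pos_of_pos (hp v) _) (Real.rpow_pos_of_pos (hq v) _))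
    ⟨⟨0, hL⟩, Finset.mem_univ _⟩

theorem chernoff_bddBelow {L : ℕ} (hL : 1 ≤ L) {p q : Fin L → ℝ}
    (hp : ∀ v, 0 < p v) (hq : ∀ v, 0 < q v) :
    BddBelow ((fun α : ℝ => Real.log (∑ v, p v ^ α * q v ^ (1 - α))) '' Set.Icc (0:ℝ) 1) := by
  refine isCompact_Icc.bddBelow_image (Continuous.continuousOn ?_)
  refine Continuous.log ?_ (fun α => (chernoff_sum_pos hL hp hq α).ne')
  refine continuous_finsetSum _ (fun v _ => ?_)
  exact (continuous_const.rpow continuous_id (fun _ => Or.inl (hp v).ne')).mul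
    (continuous_const.rpow (continuous_const.sub continuous_id) (fun _ => Or.inl (hq v).ne'))

/-- For `K` conditionally independent sensors with per-sensor conditional
pmfs `p₀ k, p₁ k` on `Fin L`, the average Chernoff information of the joint quantized
data is at most the average of the per-sensor Chernoff informations. -/
theorem avg_chernoff_le_avg_of_single (L K : ℕ) (hL : 1 ≤ L) (hK : 1 ≤ K)
    (p₀ p₁ : Fin K → Fin L → ℝ)
    (hp₀ : ∀ k v, 0 < p₀ k v) (hp₁ : ∀ k v, 0 < p₁ k v)
    (hs₀ : ∀ k, ∑ v, p₀ k v = 1) (hs₁ : ∀ k, ∑ v, p₁ k v = 1) :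
    -(1 / (K : ℝ)) * sInf
        ((fun α : ℝ => Real.log
            (∑ u : Fin K → Fin L, ∏ k, (p₀ k (u k)) ^ α * (p₁ k (u k)) ^ (1 - α)))
          '' Set.Icc (0:ℝ) 1)
      ≤ (1 / (K : ℝ)) * ∑ k,
          -sInf ((fun α : ℝ => Real.log (∑ v, (p₀ k v) ^ α * (p₁ k v) ^ (1 - α)))
            '' Set.Icc (0:ℝ) 1) := by
  rw [Finset.sum_neg_distrib, mul_neg, neg_mul, neg_le_neg_iff]
  refine mul_le_mul_of_nonneg_left ?_ (by positivity)
  refine le_csInf ((Set.nonempty_Icc.2 zero_le_one).image _) ?_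
  rintro _ ⟨α, hα, rfl⟩
  have hfactor : ∑ u : Fin K → Fin L, ∏ k, (p₀ k (u k)) ^ α * (p₁ k (u k)) ^ (1 - α)
      = ∏ k, ∑ v, (p₀ k v) ^ α * (p₁ k v) ^ (1 - α) := by
    rw [Finset.prod_univ_sum, Fintype.piFinset_univ]
  simp only [hfactor]
  rw [Real.log_prod (fun k _ => (chernoff_sum_pos hL (hp₀ k) (hp₁ k) α).ne')]
  exact Finset.sum_le_sum fun k _ =>
    csInf_le (chernoff_bddBelow hL (hp₀ k) (hp₁ k)) ⟨α, hα, rfl⟩
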